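/- arXiv:1501.01848 — 3 statements merged into one kernel-verified Lean document; each statement's English description precedes it below -/
import Mathlib

section
/- Let n ≥ 1 be an integer, let k > 0 and α > 0 be real, and let G : ℝⁿ → ℝ be a continuous function that is positively homogeneous of degree k, i.e., G(c·x) = c^k·G(x) for all c > 0 and all x ∈ ℝⁿ. Then ∫_{ℝⁿ} (G(x)/‖x‖^k)·exp(−α‖x‖²/4) dx = (α/4)^{k/2} · Γ(n/2)/Γ((k+n)/2) · ∫_{ℝⁿ} G(x)·exp(−α‖x‖²/4) dx, where the integrand on the left is interpreted as 0 at x = 0, ‖·‖ is the Euclidean norm, and Γ denotes the Gamma function. -/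
open MeasureTheory Real
open scoped Classical

/-!
In polar coordinates the integral of `g ‖x‖ • G x`, for `G` positively homogeneous of degree `k`,
splits as a one-dimensional integral depending only on `g`, `k` and the dimension, times the
integral of `G` over the unit sphere. Dividing `G` by `‖x‖ ^ k` lowers the degree to `0` without
changing `G` on the sphere, so only the radial factors, which are Gamma values, change.
-/

section HomogeneousIntegral

open Set Module Measure

variable {E F : Type*} [NormedAddCommGroup E] [NormedSpace ℝ E]
  [NormedAddCommGroup F] [NormedSpace ℝ F]

/-- Positive homogeneity of real degree `k`. Only positive scalars are tested, so that `c ^ k` is an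
honest power; the value `G 0` is thereby constrained as well (it vanishes unless `k = 0`). -/
def IsPosHomogeneous (k : ℝ) (G : E → F) : Prop :=
  ∀ c : ℝ, 0 < c → ∀ x, G (c • x) = c ^ k • G x

namespace IsPosHomogeneous

variable {k : ℝ} {G : E → F}

theorem eq_norm_rpow_smul (hG : IsPosHomogeneous k G) {x : E} (hx : x ≠ 0) :
    G x = ‖x‖ ^ k • G (‖x‖⁻¹ • x) := by
  rw [← hG _ (norm_pos_iff.2 hx), smul_inv_smul₀ (norm_ne_zero_iff.2 hx)]

theorem inv_norm_rpow_smul (hG : IsPosHomogeneous k G) :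
    IsPosHomogeneous 0 fun x ↦ (‖x‖ ^ k)⁻¹ • G x := by
  intro c hc x
  have hck : c ^ k ≠ 0 := (rpow_pos_of_pos hc k).ne'
  simp only [hG c hc]
  rw [norm_smul, norm_of_nonneg hc.le, mul_rpow hc.le (norm_nonneg x), mul_inv_rev,
    mul_smul, inv_smul_smul₀ hck, rpow_zero, one_smul]

end IsPosHomogeneous

theorem integral_volumeIoiPow (m : ℕ) (f : ℝ → F) :
    ∫ y : Ioi (0 : ℝ), f y ∂volumeIoiPow m = ∫ y in Ioi (0 : ℝ), y ^ m • f y := by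
  have hmeas : Measurable fun y : Ioi (0 : ℝ) ↦ (y.1 ^ m).toNNReal :=
    (measurable_subtype_coe.pow_const m).real_toNNReal
  simp only [volumeIoiPow, ENNReal.ofReal]
  rw [integral_withDensity_eq_integral_smul hmeas,
    integral_subtype_comap measurableSet_Ioi fun y ↦ (y ^ m).toNNReal • f y]
  refine setIntegral_congr_fun measurableSet_Ioi fun y (hy : 0 < y) ↦ ?_
  simp only [NNReal.smul_def, coe_toNNReal _ (pow_nonneg hy.le m)]

theorem integral_pow_pred_smul_exp_neg_mul_rpow_mul_rpow {m : ℕ} (hm : 0 < m)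
    {k p b : ℝ} (hk : 0 < k + m) (hp : 0 < p) (hb : 0 < b) :
    ∫ y in Ioi (0 : ℝ), y ^ (m - 1) • (exp (-b * y ^ p) * y ^ k) =
      b ^ (-(k + m) / p) * (1 / p) * Gamma ((k + m) / p) := by
  have hrpow := integral_rpow_mul_exp_neg_mul_rpow (q := k + m - 1) hp (by linarith) hb
  rw [sub_add_cancel] at hrpow
  rw [← hrpow]
  refine setIntegral_congr_fun measurableSet_Ioi fun y (hy : 0 < y) ↦ ?_
  have hpow : y ^ (k + m - 1) = y ^ (m - 1) * y ^ k := by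
    rw [← rpow_natCast, ← rpow_add hy, Nat.cast_pred hm]
    ring_nf
  simp only [smul_eq_mul, hpow]
  ring

variable [Nontrivial E] [FiniteDimensional ℝ E] [MeasurableSpace E] [BorelSpace E]
  (μ : Measure E) [μ.IsAddHaarMeasure]

theorem integral_radial_smul_angular (g : ℝ → ℝ) (f : E → F) :
    ∫ x, g ‖x‖ • f (‖x‖⁻¹ • x) ∂μ =
      (∫ y in Ioi (0 : ℝ), y ^ (finrank ℝ E - 1) • g y) •
        ∫ s : Metric.sphere (0 : E) 1, f s ∂μ.toSphere :=
  calc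
    ∫ x, g ‖x‖ • f (‖x‖⁻¹ • x) ∂μ =
        ∫ x : ({0}ᶜ : Set E), g ‖x.1‖ • f (‖x.1‖⁻¹ • x.1) ∂μ.comap (↑) := by
      rw [integral_subtype_comap (measurableSet_singleton _).compl
        fun x ↦ g ‖x‖ • f (‖x‖⁻¹ • x), restrict_compl_singleton]
    _ = ∫ z, g z.2 • f z.1 ∂μ.toSphere.prod (volumeIoiPow (finrank ℝ E - 1)) := by
      simpa using μ.measurePreserving_homeomorphUnitSphereProd.integral_comp
        (Homeomorph.measurableEmbedding _)
        fun z : Metric.sphere (0 : E) 1 × Ioi (0 : ℝ) ↦ g z.2 • f z.1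
    _ = ∫ z, g z.1 • f z.2 ∂(volumeIoiPow (finrank ℝ E - 1)).prod μ.toSphere :=
      (integral_prod_swap _).symm
    _ = (∫ y : Ioi (0 : ℝ), g y ∂volumeIoiPow (finrank ℝ E - 1)) •
        ∫ s : Metric.sphere (0 : E) 1, f s ∂μ.toSphere :=
      integral_prod_smul (fun y : Ioi (0 : ℝ) ↦ g y) fun s : Metric.sphere (0 : E) 1 ↦ f s
    _ = _ := by rw [integral_volumeIoiPow]

namespace IsPosHomogeneous

variable {k : ℝ} {G : E → F}

theorem integral_radial_smul (hG : IsPosHomogeneous k G) (g : ℝ → ℝ) :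
    ∫ x, g ‖x‖ • G x ∂μ =
      (∫ y in Ioi (0 : ℝ), y ^ (finrank ℝ E - 1) • (g y * y ^ k)) •
        ∫ s : Metric.sphere (0 : E) 1, G s ∂μ.toSphere := by
  rw [← integral_radial_smul_angular μ (fun y ↦ g y * y ^ k)]
  refine integral_congr_ae ?_
  filter_upwards [ae_ne μ 0] with x hx
  rw [mul_smul, ← hG.eq_norm_rpow_smul hx]

theorem integral_exp_neg_mul_norm_rpow_smul (hG : IsPosHomogeneous k G) {p b : ℝ}
    (hk : 0 < k + finrank ℝ E) (hp : 0 < p) (hb : 0 < b) :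
    ∫ x, exp (-b * ‖x‖ ^ p) • G x ∂μ =
      (b ^ (-(k + finrank ℝ E) / p) * (1 / p) * Gamma ((k + finrank ℝ E) / p)) •
        ∫ s : Metric.sphere (0 : E) 1, G s ∂μ.toSphere := by
  rw [hG.integral_radial_smul μ fun y ↦ exp (-b * y ^ p),
    integral_pow_pred_smul_exp_neg_mul_rpow_mul_rpow finrank_pos hk hp hb]

end IsPosHomogeneous

theorem stmt_1_general {k p b : ℝ} (hk : 0 < k + finrank ℝ E) (hp : 0 < p) (hb : 0 < b) {G : E → F}
    (hG : IsPosHomogeneous k G) :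
    ∫ x, exp (-b * ‖x‖ ^ p) • (‖x‖ ^ k)⁻¹ • G x ∂μ =
      (b ^ (k / p) * (Gamma (finrank ℝ E / p) / Gamma ((k + finrank ℝ E) / p))) •
        ∫ x, exp (-b * ‖x‖ ^ p) • G x ∂μ := by
  have hdim : (0 : ℝ) < 0 + finrank ℝ E := by
    simpa only [zero_add] using Nat.cast_pos.2 finrank_pos
  have hsphere (s : Metric.sphere (0 : E) 1) : (‖s.1‖ ^ k)⁻¹ • G s = G s := by
    rw [norm_eq_of_mem_sphere, one_rpow, inv_one, one_smul]
  have hGamma : Gamma ((k + finrank ℝ E) / p) ≠ 0 :=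
    (Gamma_pos_of_pos (div_pos hk hp)).ne'
  have hpow : b ^ (-finrank ℝ E / p) = b ^ (k / p) * b ^ (-(k + finrank ℝ E) / p) := by
    rw [← rpow_add hb]
    ring_nf
  rw [hG.inv_norm_rpow_smul.integral_exp_neg_mul_norm_rpow_smul μ hdim hp hb,
    hG.integral_exp_neg_mul_norm_rpow_smul μ hk hp hb, smul_smul]
  simp only [hsphere, zero_add, hpow]
  congr 1
  field_simp

end HomogeneousIntegral

/-- Lemma 2.2 of Kopp–Miller (case `B = I`) for a continuous positively
homogeneous function `G` of real degree `k > 0`. -/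
theorem stmt_1 (n : ℕ) (hn : 1 ≤ n) (k α : ℝ) (hk : 0 < k) (hα : 0 < α)
    (G : EuclideanSpace ℝ (Fin n) → ℝ) (hGcont : Continuous G)
    (hGhom : ∀ c : ℝ, 0 < c → ∀ x : EuclideanSpace ℝ (Fin n), G (c • x) = c ^ k * G x) :
    (∫ x : EuclideanSpace ℝ (Fin n),
        (if x = 0 then (0 : ℝ) else G x / ‖x‖ ^ k) * Real.exp (-α * ‖x‖ ^ 2 / 4))
      = (α / 4) ^ (k / 2) * (Real.Gamma (n / 2) / Real.Gamma ((k + n) / 2)) *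
        ∫ x : EuclideanSpace ℝ (Fin n), G x * Real.exp (-α * ‖x‖ ^ 2 / 4) := by
  have : Nonempty (Fin n) := ⟨⟨0, hn⟩⟩
  have hexp (r : ℝ) : -α * r ^ 2 / 4 = -(α / 4) * r ^ (2 : ℝ) := by rw [rpow_two]; ring
  have hdiv (x : EuclideanSpace ℝ (Fin n)) :
      (if x = 0 then 0 else G x / ‖x‖ ^ k) = (‖x‖ ^ k)⁻¹ • G x := by
    split_ifs with hx
    · -- `‖0‖ ^ k = 0` has inverse `0` by convention.
      simp [hx, hk.ne']
    · rw [smul_eq_mul, div_eq_inv_mul]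
  simpa only [hexp, hdiv, smul_eq_mul, mul_comm (rexp _), finrank_euclideanSpace_fin] using
    stmt_1_general volume (by positivity) two_pos (div_pos hα four_pos) hGhom
end

section
/- Let α > 3/2 be real and let w(t) = ∑_{ℓ=0}^∞ (Γ(α)/(Γ(α+ℓ)·ℓ!))·(−t²/4)^ℓ = ₀F₁(α; −t²/4). Then for every x ∈ ℝ with |x| < 1, (1/(2π))·∫_ℝ cos(t·x)·w(t) dt = (1/2)·(Γ(α)/(Γ(3/2)·Γ(α − 1/2)))·(1 − x²)^{α − 3/2}. -/
open Real MeasureTheory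

/-!
By Poisson's integral, the cosine transform of the weight `(1 - x ^ 2) ^ (α - 3 / 2)` on `(-1, 1)`
is a constant multiple of `₀F₁(α; -t ^ 2 / 4)`: expand the cosine and integrate termwise, the
moments of the weight being beta functions. Fourier inversion then recovers the weight from `w`, as
soon as `w` is integrable. For the decay of `w`, note that `p = t ^ (α - 1 / 2) ₀F₁(α; -t ^ 2 / 4)`
is the first coordinate of a rotation perturbed by terms of order `1 / t`. Those terms average out:
a modified energy of the system changes at a relative rate `O(1 / t ^ 2)`, which is integrable, so
`p` stays bounded and `w = O(t ^ (1 / 2 - α))`.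
-/

open Filter Asymptotics Set ProbabilityTheory FourierTransform
open scoped Nat

lemma radius_regularizedHGFunSeries_zero_singleton (a : ℂ) :
    (Complex.regularizedHGFunSeries 0 {a}).radius = ⊤ :=
  Complex.radius_regularizedHGFunSeries_eq_top (by simp)

lemma hasSum_regularizedHGFun_zero_singleton (a z : ℂ) :
    HasSum (fun n : ℕ => z ^ n / (n ! * Complex.Gamma (a + n)))
      (Complex.regularizedHGFun 0 {a} z) := by
  have hz : z ∈ Metric.eball 0 (Complex.regularizedHGFunSeries 0 {a}).radius := by
    simp [radius_regularizedHGFunSeries_zero_singleton]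
  refine ((Complex.regularizedHGFunSeries 0 {a}).hasSum hz).congr_fun fun n => ?_
  simp [Complex.regularizedHGFunCoeff, div_eq_mul_inv]

lemma hasDerivAt_regularizedHGFun_zero_singleton (a z : ℂ) :
    HasDerivAt (Complex.regularizedHGFun 0 {a}) (Complex.regularizedHGFun 0 {a + 1} z) z := by
  set p := Complex.regularizedHGFunSeries 0 {a} with hp
  have hr : p.radius = ⊤ := radius_regularizedHGFunSeries_zero_singleton a
  have hderiv : HasDerivAt (Complex.regularizedHGFun 0 {a}) (p.derivSeries.sum z 1) z :=
    (p.hasFDerivAt_sum (by simp [hr])).hasDerivAt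
  have hz : z ∈ Metric.eball 0 p.derivSeries.radius := by
    simp [top_le_iff.1 (hr ▸ p.radius_le_radius_derivSeries)]
  have hsum : HasSum (fun n => p.derivSeries n (fun _ => z) 1) (p.derivSeries.sum z 1) :=
    (p.derivSeries.hasSum hz).mapL (ContinuousLinearMap.apply ℂ ℂ (1 : ℂ))
  refine hderiv.congr_deriv (hsum.unique ?_)
  refine (hasSum_regularizedHGFun_zero_singleton (a + 1) z).congr_fun fun n => ?_
  have hn : (n : ℂ) + 1 ≠ 0 := n.cast_add_one_ne_zero
  simp only [FormalMultilinearSeries.apply_eq_pow_smul_coeff, smul_apply,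
    FormalMultilinearSeries.derivSeries_coeff_one, hp, Complex.regularizedHGFunSeries_coeff,
    Complex.regularizedHGFunCoeff, Nat.factorial_succ]
  simp only [Multiset.map_zero, Multiset.prod_zero, Nat.cast_mul, Nat.cast_add, Nat.cast_one,
    Multiset.map_singleton, Multiset.prod_singleton, one_div, mul_inv_rev, nsmul_eq_mul,
    smul_eq_mul, add_assoc, add_comm (1 : ℂ)]
  field_simp

lemma regularizedHGFun_zero_singleton_eq_add (a z : ℂ) :
    Complex.regularizedHGFun 0 {a} z =
      a * Complex.regularizedHGFun 0 {a + 1} z + z * Complex.regularizedHGFun 0 {a + 2} z := by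
  have hshift : HasSum (fun n : ℕ => n * (z ^ n / (n ! * Complex.Gamma (a + 1 + n))))
      (z * Complex.regularizedHGFun 0 {a + 2} z) := by
    rw [← hasSum_nat_add_iff' 1]
    simp only [Finset.range_one, Finset.sum_singleton, Nat.cast_zero, zero_mul, sub_zero]
    refine ((hasSum_regularizedHGFun_zero_singleton (a + 2) z).mul_left z).congr_fun fun n => ?_
    have hn : (n : ℂ) + 1 ≠ 0 := n.cast_add_one_ne_zero
    rw [Nat.factorial_succ]
    push_cast
    rw [show a + 1 + ((n : ℂ) + 1) = a + 2 + n by ring, pow_succ]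
    field_simp
  refine (hasSum_regularizedHGFun_zero_singleton a z).unique <|
    (((hasSum_regularizedHGFun_zero_singleton (a + 1) z).mul_left a).add hshift).congr_fun
      fun n => ?_
  have hΓ := Complex.one_div_Gamma_eq_self_mul_one_div_Gamma_add_one (a + n)
  rw [← div_div, div_eq_mul_inv _ (Complex.Gamma (a + n)), hΓ, add_right_comm]
  ring

/-- The Bessel function `J_{a-1}` with its branch point removed: the even entire function
`(t / 2) ^ (1 - a) * J_{a-1}(t) = ₀F₁(a; -t² / 4) / Γ(a)`. The real part only transports Mathlib's
complex function to `ℝ`, as its values at real arguments are real. -/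
noncomputable def reducedBessel (a t : ℝ) : ℝ :=
  (Complex.regularizedHGFun 0 {(a : ℂ)} ((-t ^ 2 / 4 : ℝ) : ℂ)).re

section ReducedBessel

variable (a t : ℝ)

lemma reducedBessel_neg : reducedBessel a (-t) = reducedBessel a t := by
  simp only [reducedBessel, neg_sq]

lemma hasSum_reducedBessel :
    HasSum (fun n : ℕ => (-t ^ 2 / 4) ^ n / (n ! * Gamma (a + n))) (reducedBessel a t) := by
  refine (Complex.hasSum_re (hasSum_regularizedHGFun_zero_singleton a _)).congr_fun fun n => ?_
  rw [← Complex.ofReal_natCast n, ← Complex.ofReal_add, Complex.Gamma_ofReal]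
  norm_cast

lemma reducedBessel_eq_sub :
    reducedBessel a t =
      a * reducedBessel (a + 1) t - t ^ 2 / 4 * reducedBessel (a + 2) t := by
  simp only [reducedBessel, regularizedHGFun_zero_singleton_eq_add (a : ℂ), Complex.add_re,
    Complex.re_ofReal_mul, Complex.ofReal_add, Complex.ofReal_one, Complex.ofReal_ofNat]
  ring

lemma hasDerivAt_reducedBessel :
    HasDerivAt (reducedBessel a) (-(t / 2) * reducedBessel (a + 1) t) t := by
  have hre : HasDerivAt (fun z : ℝ => (Complex.regularizedHGFun 0 {(a : ℂ)} z).re)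
      (reducedBessel (a + 1) t) (-t ^ 2 / 4) := by
    refine (hasDerivAt_regularizedHGFun_zero_singleton a
      ((-t ^ 2 / 4 : ℝ) : ℂ)).real_of_complex.congr_deriv ?_
    rw [reducedBessel, Complex.ofReal_add, Complex.ofReal_one]
  have hsq : HasDerivAt (fun t : ℝ => -t ^ 2 / 4) (-(t / 2)) t :=
    ((hasDerivAt_pow 2 t).neg.div_const 4).congr_deriv (by norm_num; ring)
  exact (hre.comp t hsq).congr_deriv (mul_comm _ _)

lemma continuous_reducedBessel : Continuous (reducedBessel a) :=
  continuous_iff_continuousAt.2 fun t => (hasDerivAt_reducedBessel a t).continuousAt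

end ReducedBessel

lemma two_mul_mul_mul_le_abs_mul_sq_add_sq (k a b : ℝ) :
    2 * k * (a * b) ≤ |k| * (a ^ 2 + b ^ 2) :=
  calc 2 * k * (a * b) ≤ |2 * k * (a * b)| := le_abs_self _
    _ = |k| * (2 * |a| * |b|) := by rw [abs_mul, abs_mul, abs_mul, abs_two]; ring
    _ ≤ |k| * (a ^ 2 + b ^ 2) := by
        rw [← sq_abs a, ← sq_abs b]
        gcongr
        exact two_mul_le_add_sq _ _

/-- The squared norm of a solution `(p, q)` of the perturbed rotation `p' = k p / t - q`,
`q' = p - k q / t`, minus a cross term chosen to cancel the part of order `1 / t` of its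
derivative. -/
noncomputable def rotationEnergy (k : ℝ) (p q : ℝ → ℝ) (t : ℝ) : ℝ :=
  p t ^ 2 + q t ^ 2 - 2 * k * (p t * q t) / t

section RotationEnergy

variable {k t T : ℝ} {p q : ℝ → ℝ}

lemma hasDerivAt_rotationEnergy (ht : t ≠ 0) (hp : HasDerivAt p (k * p t / t - q t) t)
    (hq : HasDerivAt q (p t - k * q t / t) t) :
    HasDerivAt (rotationEnergy k p q) (2 * k * (p t * q t) / t ^ 2) t := by
  refine (((hp.pow 2).add (hq.pow 2)).sub
    (((hp.mul hq).const_mul (2 * k)).div (hasDerivAt_id t) ht)).congr_deriv ?_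
  simp only [id_eq, Nat.cast_ofNat, Nat.add_one_sub_one, pow_one, Pi.mul_apply]
  field_simp
  ring

lemma sq_add_sq_le_two_mul_rotationEnergy (ht : 0 < t) (hkt : 2 * |k| ≤ t) :
    p t ^ 2 + q t ^ 2 ≤ 2 * rotationEnergy k p q t := by
  have hcross : 2 * k * (p t * q t) / t ≤ (p t ^ 2 + q t ^ 2) / 2 := by
    rw [div_le_iff₀ ht]
    calc 2 * k * (p t * q t) ≤ |k| * (p t ^ 2 + q t ^ 2) :=
          two_mul_mul_mul_le_abs_mul_sq_add_sq _ _ _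
      _ ≤ t / 2 * (p t ^ 2 + q t ^ 2) := by gcongr; linarith
      _ = (p t ^ 2 + q t ^ 2) / 2 * t := by ring
  rw [rotationEnergy]
  linarith

lemma antitoneOn_rotationEnergy_mul_exp (hT : 0 < T) (hkT : 2 * |k| ≤ T)
    (hp : ∀ t, 0 < t → HasDerivAt p (k * p t / t - q t) t)
    (hq : ∀ t, 0 < t → HasDerivAt q (p t - k * q t / t) t) :
    AntitoneOn (fun t => rotationEnergy k p q t * exp (2 * |k| / t)) (Ici T) := by
  have hderiv (t : ℝ) (ht : 0 < t) :
      HasDerivAt (fun t => rotationEnergy k p q t * exp (2 * |k| / t))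
        ((2 * k * (p t * q t) - 2 * |k| * rotationEnergy k p q t) / t ^ 2 *
          exp (2 * |k| / t)) t := by
    refine ((hasDerivAt_rotationEnergy ht.ne' (hp t ht) (hq t ht)).mul
      ((hasDerivAt_const t (2 * |k|)).div (hasDerivAt_id t) ht.ne').exp).congr_deriv ?_
    simp only [id_eq, Pi.div_apply]
    ring
  refine antitoneOn_of_hasDerivWithinAt_nonpos (convex_Ici T)
    (fun t ht => (hderiv t (hT.trans_le ht)).continuousAt.continuousWithinAt)
    (fun t ht => (hderiv t ?_).hasDerivWithinAt) fun t ht => ?_ <;>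
    rw [interior_Ici, mem_Ioi] at ht
  · exact hT.trans ht
  · have hcross : 2 * k * (p t * q t) ≤ 2 * |k| * rotationEnergy k p q t :=
      calc 2 * k * (p t * q t) ≤ |k| * (p t ^ 2 + q t ^ 2) :=
            two_mul_mul_mul_le_abs_mul_sq_add_sq _ _ _
        _ ≤ |k| * (2 * rotationEnergy k p q t) := by
            gcongr
            exact sq_add_sq_le_two_mul_rotationEnergy (hT.trans ht) (hkT.trans ht.le)
        _ = 2 * |k| * rotationEnergy k p q t := by ring
    exact mul_nonpos_of_nonpos_of_nonneg
      (div_nonpos_of_nonpos_of_nonneg (sub_nonpos.2 hcross) (sq_nonneg t)) (exp_pos _).le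

lemma isBigO_one_of_perturbed_rotation
    (hp : ∀ t, 0 < t → HasDerivAt p (k * p t / t - q t) t)
    (hq : ∀ t, 0 < t → HasDerivAt q (p t - k * q t / t) t) :
    p =O[atTop] (1 : ℝ → ℝ) := by
  set T := 2 * |k| + 1 with hT_def
  have hT : 0 < T := by positivity
  have hkT : 2 * |k| ≤ T := by simp [hT_def]
  set C := 2 * (rotationEnergy k p q T * exp (2 * |k| / T))
  refine .of_bound √C ((eventually_ge_atTop T).mono fun t ht => ?_)
  have ht₀ : 0 < t := hT.trans_le ht
  have henergy := sq_add_sq_le_two_mul_rotationEnergy (p := p) (q := q) ht₀ (hkT.trans ht)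
  have hE₀ : 0 ≤ rotationEnergy k p q t := by nlinarith [sq_nonneg (p t), sq_nonneg (q t)]
  have hpC : p t ^ 2 ≤ C :=
    calc p t ^ 2 ≤ 2 * rotationEnergy k p q t := by linarith [sq_nonneg (q t)]
      _ ≤ 2 * (rotationEnergy k p q t * exp (2 * |k| / t)) := by
          gcongr
          exact le_mul_of_one_le_right hE₀ (one_le_exp (by positivity))
      _ ≤ C := mul_le_mul_of_nonneg_left
          (antitoneOn_rotationEnergy_mul_exp hT hkT hp hq self_mem_Ici ht ht) zero_le_two
  simpa using abs_le_sqrt hpC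

end RotationEnergy

section ReducedBessel

variable {a t : ℝ}

lemma hasDerivAt_rpow_mul_reducedBessel (ht : 0 < t) :
    HasDerivAt (fun t => t ^ (a - 1 / 2) * reducedBessel a t)
      ((a - 1 / 2) * (t ^ (a - 1 / 2) * reducedBessel a t) / t -
        t ^ (a + 1 / 2) / 2 * reducedBessel (a + 1) t) t := by
  refine ((hasDerivAt_rpow_const (.inl ht.ne')).mul
    (hasDerivAt_reducedBessel a t)).congr_deriv ?_
  rw [rpow_sub_one ht.ne', show a + 1 / 2 = a - 1 / 2 + 1 by ring, rpow_add_one ht.ne']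
  ring

lemma hasDerivAt_rpow_mul_reducedBessel_add_one (ht : 0 < t) :
    HasDerivAt (fun t => t ^ (a + 1 / 2) / 2 * reducedBessel (a + 1) t)
      (t ^ (a - 1 / 2) * reducedBessel a t -
        (a - 1 / 2) * (t ^ (a + 1 / 2) / 2 * reducedBessel (a + 1) t) / t) t := by
  refine (((hasDerivAt_rpow_const (.inl ht.ne')).div_const 2).mul
    (hasDerivAt_reducedBessel (a + 1) t)).congr_deriv ?_
  rw [reducedBessel_eq_sub a, rpow_sub_one ht.ne', show a + 1 + 1 = a + 2 by ring,
    show a + 1 / 2 = a - 1 / 2 + 1 by ring, rpow_add_one ht.ne']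
  field_simp
  ring

variable (a) in
lemma isBigO_reducedBessel : reducedBessel a =O[atTop] fun t => t ^ (1 / 2 - a) := by
  have hbdd : (fun t => t ^ (a - 1 / 2) * reducedBessel a t) =O[atTop] (1 : ℝ → ℝ) :=
    isBigO_one_of_perturbed_rotation (fun _ => hasDerivAt_rpow_mul_reducedBessel)
      fun _ => hasDerivAt_rpow_mul_reducedBessel_add_one
  refine ((isBigO_refl (fun t : ℝ => t ^ (1 / 2 - a)) atTop).mul hbdd).congr' ?_ (by simp)
  filter_upwards [eventually_gt_atTop 0] with t ht
  rw [← mul_assoc, ← rpow_add ht]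
  simp

lemma integrable_reducedBessel (ha : 3 / 2 < a) : Integrable (reducedBessel a) :=
  (continuous_reducedBessel a).locallyIntegrable.integrable_of_isBigO_atTop_of_norm_isNegInvariant
    (.of_forall fun t => by simp [reducedBessel_neg]) (isBigO_reducedBessel a)
    (integrableAtFilter_rpow_atTop_iff.2 (by linarith))

end ReducedBessel

lemma Gamma_natCast_add_half_mul_factorial (n : ℕ) :
    Gamma (n + 1 / 2) * n ! = √π * (2 * n)! / 4 ^ n := by
  have hdup := Gamma_mul_Gamma_add_half (n + 1 / 2 : ℝ)
  rw [show (n : ℝ) + 1 / 2 + 1 / 2 = n + 1 by ring, Gamma_nat_eq_factorial,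
    show 2 * ((n : ℝ) + 1 / 2) = (2 * n : ℕ) + 1 by push_cast; ring, Gamma_nat_eq_factorial,
    sub_add_cancel_right, rpow_neg zero_le_two, rpow_natCast, pow_mul] at hdup
  rw [hdup, show (2 : ℝ) ^ 2 = 4 by norm_num]
  ring

lemma integral_betaPDFReal {a b : ℝ} (ha : 0 < a) (hb : 0 < b) :
    ∫ x, betaPDFReal a b x = 1 := by
  have hnonneg (x : ℝ) : 0 ≤ betaPDFReal a b x := by
    by_cases hx : 0 < x ∧ x < 1
    · exact (betaPDFReal_pos hx.1 hx.2 ha hb).le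
    · simp [betaPDFReal, hx]
  rw [integral_eq_lintegral_of_nonneg_ae (.of_forall hnonneg)
    (stronglyMeasurable_betaPDFReal a b).aestronglyMeasurable]
  exact (congrArg ENNReal.toReal (lintegral_betaPDF_eq_one ha hb)).trans ENNReal.toReal_one

lemma integral_Ioi_betaPDFReal {a b : ℝ} (ha : 0 < a) (hb : 0 < b) :
    ∫ x in Ioi 0, betaPDFReal a b x = 1 := by
  rw [setIntegral_eq_integral_of_forall_compl_eq_zero fun x hx => ?_, integral_betaPDFReal ha hb]
  simp [betaPDFReal, show ¬ 0 < x from hx]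

/-- The weight `(1 - x ^ 2) ^ b` on `(-1, 1)`, extended by zero, for which the Gegenbauer
polynomials of index `b + 1 / 2` are orthogonal. -/
noncomputable def gegenbauerWeight (b : ℝ) : ℝ → ℝ :=
  (Ioo (-1) 1).indicator fun x => (1 - x ^ 2) ^ b

section GegenbauerWeight

variable {b : ℝ}

lemma gegenbauerWeight_abs (x : ℝ) : gegenbauerWeight b |x| = gegenbauerWeight b x := by
  simp only [gegenbauerWeight, indicator, mem_Ioo, ← abs_lt, abs_abs, sq_abs]

lemma gegenbauerWeight_neg (x : ℝ) : gegenbauerWeight b (-x) = gegenbauerWeight b x := by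
  rw [← gegenbauerWeight_abs, abs_neg, gegenbauerWeight_abs]

lemma gegenbauerWeight_nonneg (x : ℝ) : 0 ≤ gegenbauerWeight b x :=
  indicator_nonneg (fun _ hx => rpow_nonneg (by nlinarith [hx.1, hx.2]) b) x

lemma gegenbauerWeight_eq_max_rpow (hb : 0 < b) (x : ℝ) :
    gegenbauerWeight b x = max (1 - x ^ 2) 0 ^ b := by
  by_cases hx : x ∈ Ioo (-1) 1
  · rw [gegenbauerWeight, indicator_of_mem hx, max_eq_left (by nlinarith [hx.1, hx.2])]
  · have hx₁ : 1 ≤ x ^ 2 := by rwa [one_le_sq_iff_one_le_abs, ← not_lt, abs_lt]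
    rw [gegenbauerWeight, indicator_of_notMem hx, max_eq_right (by linarith), zero_rpow hb.ne']

lemma continuous_gegenbauerWeight (hb : 0 < b) : Continuous (gegenbauerWeight b) := by
  rw [funext (gegenbauerWeight_eq_max_rpow hb)]
  exact Continuous.rpow_const (by fun_prop) fun _ => .inr hb.le

-- The exponent `2 - 1` is left unevaluated to match `integral_comp_rpow_Ioi_of_pos`.
lemma two_mul_rpow_mul_gegenbauerWeight_eq_betaPDFReal {s x : ℝ} (hs : -1 < s) (hb : -1 < b)
    (hx : 0 < x) :
    2 * (x ^ s * gegenbauerWeight b x) = beta ((s + 1) / 2) (b + 1) *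
      ((2 * x ^ (2 - 1 : ℝ)) • betaPDFReal ((s + 1) / 2) (b + 1) (x ^ (2 : ℝ))) := by
  have hbeta : beta ((s + 1) / 2) (b + 1) ≠ 0 := (beta_pos (by linarith) (by linarith)).ne'
  by_cases hx₁ : x < 1
  · have hpow : (x ^ 2) ^ ((s + 1) / 2 - 1) * x = x ^ s := by
      rw [← rpow_natCast_mul hx.le, ← rpow_add_one hx.ne']
      congr 1
      push_cast
      ring
    have hmem : x ∈ Ioo (-1) 1 := ⟨by linarith, hx₁⟩
    rw [gegenbauerWeight, indicator_of_mem hmem, rpow_two, betaPDFReal,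
      if_pos ⟨by positivity, by nlinarith⟩, add_sub_cancel_right, ← hpow, smul_eq_mul,
      show (2 - 1 : ℝ) = 1 by norm_num, rpow_one]
    field_simp
  · have hx₂ : ¬ x ^ 2 < 1 := by nlinarith
    simp [gegenbauerWeight, betaPDFReal, hx₁, hx₂]

lemma integral_abs_rpow_mul_gegenbauerWeight {s : ℝ} (hs : -1 < s) (hb : -1 < b) :
    ∫ x, |x| ^ s * gegenbauerWeight b x = beta ((s + 1) / 2) (b + 1) :=
  calc ∫ x, |x| ^ s * gegenbauerWeight b x = ∫ x, |x| ^ s * gegenbauerWeight b |x| := by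
        simp only [gegenbauerWeight_abs]
    _ = ∫ x in Ioi 0, 2 * (x ^ s * gegenbauerWeight b x) := by
        rw [integral_comp_abs (f := fun x => x ^ s * gegenbauerWeight b x), integral_const_mul]
    _ = beta ((s + 1) / 2) (b + 1) * ∫ x in Ioi 0, betaPDFReal ((s + 1) / 2) (b + 1) x := by
        rw [setIntegral_congr_fun measurableSet_Ioi fun x hx =>
            two_mul_rpow_mul_gegenbauerWeight_eq_betaPDFReal hs hb hx,
          integral_const_mul, integral_comp_rpow_Ioi_of_pos two_pos]
    _ = beta ((s + 1) / 2) (b + 1) := by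
        rw [integral_Ioi_betaPDFReal (by linarith) (by linarith), mul_one]

lemma integral_pow_mul_gegenbauerWeight (hb : -1 < b) (n : ℕ) :
    ∫ x, x ^ (2 * n) * gegenbauerWeight b x = beta (n + 1 / 2) (b + 1) := by
  have hn : (-1 : ℝ) < (2 * n : ℕ) := neg_one_lt_zero.trans_le (Nat.cast_nonneg _)
  have hmoment := integral_abs_rpow_mul_gegenbauerWeight hn hb
  simp only [rpow_natCast, (even_two_mul n).pow_abs] at hmoment
  rw [hmoment]
  congr 1
  push_cast
  ring

lemma integrable_gegenbauerWeight (hb : -1 < b) : Integrable (gegenbauerWeight b) := by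
  refine .of_integral_ne_zero ?_
  have h := integral_pow_mul_gegenbauerWeight hb 0
  simp only [mul_zero, pow_zero, one_mul] at h
  rw [h]
  exact (beta_pos (by norm_num) (by linarith)).ne'

end GegenbauerWeight

/-- The cosine transform `t ↦ ∫ cos (t x) g x dx` over the whole line, which is the Fourier
transform of an even `g`, in the angular-frequency normalization. -/
noncomputable def cosTransform (g : ℝ → ℝ) (t : ℝ) : ℝ := ∫ x, cos (t * x) * g x

section CosTransform

variable {g : ℝ → ℝ} {t : ℝ}

lemma cosTransform_const_mul (c : ℝ) :
    cosTransform (fun x => c * g x) t = c * cosTransform g t := by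
  simp only [cosTransform, mul_left_comm _ c, integral_const_mul]

lemma hasSum_cosTransform (hg : AEStronglyMeasurable g)
    (hcosh : Integrable fun x => cosh (t * x) * g x) :
    HasSum (fun n : ℕ => (-1) ^ n * t ^ (2 * n) / (2 * n)! * ∫ x, x ^ (2 * n) * g x)
      (cosTransform g t) := by
  have hbound (x : ℝ) : HasSum (fun n : ℕ => (t * x) ^ (2 * n) / (2 * n)! * |g x|)
      (cosh (t * x) * |g x|) := (hasSum_cosh (t * x)).mul_right _
  have hseries : HasSum (fun n : ℕ => ∫ x, (-1) ^ n * (t * x) ^ (2 * n) / (2 * n)! * g x)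
      (cosTransform g t) := by
    refine hasSum_integral_of_dominated_convergence
      (fun n x => (t * x) ^ (2 * n) / (2 * n)! * |g x|)
      (fun n => (Continuous.aestronglyMeasurable (by fun_prop)).mul hg)
      (fun n => .of_forall fun x => ?_) (.of_forall fun x => (hbound x).summable)
      ?_ (.of_forall fun x => (hasSum_cos (t * x)).mul_right (g x))
    · rw [norm_mul, norm_div, norm_mul, norm_pow, norm_neg, norm_one, one_pow, one_mul,
        norm_of_nonneg ((even_two_mul n).pow_nonneg _), norm_natCast, norm_eq_abs]
    · simpa only [(hbound _).tsum_eq, abs_mul, abs_of_pos (cosh_pos _)] using hcosh.abs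
  refine hseries.congr_fun fun n => ?_
  rw [← integral_const_mul]
  exact integral_congr_ae (.of_forall fun x => by ring)

end CosTransform

lemma integrable_cosh_mul_gegenbauerWeight {b : ℝ} (hb : -1 < b) (t : ℝ) :
    Integrable fun x => cosh (t * x) * gegenbauerWeight b x := by
  refine ((integrable_gegenbauerWeight hb).const_mul (cosh t)).mono'
    ((Continuous.aestronglyMeasurable (by fun_prop)).mul
      (integrable_gegenbauerWeight hb).aestronglyMeasurable) (.of_forall fun x => ?_)
  by_cases hx : x ∈ Ioo (-1) 1
  · rw [norm_of_nonneg (mul_nonneg (cosh_pos _).le (gegenbauerWeight_nonneg x))]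
    refine mul_le_mul_of_nonneg_right (cosh_le_cosh.2 ?_) (gegenbauerWeight_nonneg x)
    rw [abs_mul]
    exact mul_le_of_le_one_right (abs_nonneg t) (abs_lt.2 hx).le
  · simp [gegenbauerWeight, hx]

lemma cosTransform_gegenbauerWeight {b : ℝ} (hb : -1 < b) (t : ℝ) :
    cosTransform (gegenbauerWeight b) t = √π * Gamma (b + 1) * reducedBessel (b + 3 / 2) t := by
  refine (hasSum_cosTransform (integrable_gegenbauerWeight hb).aestronglyMeasurable
    (integrable_cosh_mul_gegenbauerWeight hb t)).unique ?_
  refine ((hasSum_reducedBessel (b + 3 / 2) t).mul_left _).congr_fun fun n => ?_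
  have hΓ : Gamma (n + 1 / 2) = √π * (2 * n)! / (4 ^ n * n !) := by
    rw [← div_div, ← Gamma_natCast_add_half_mul_factorial, mul_div_cancel_right₀]
    positivity
  rw [integral_pow_mul_gegenbauerWeight hb, beta, hΓ,
    show (n : ℝ) + 1 / 2 + (b + 1) = b + 3 / 2 + n by ring, div_pow, neg_pow (t ^ 2),
    pow_mul t]
  field_simp

lemma fourier_ofReal_eq_cosTransform {g : ℝ → ℝ} (hg : Integrable g) (heven : ∀ x, g (-x) = g x)
    (ξ : ℝ) : 𝓕 (fun x => (g x : ℂ)) ξ = cosTransform g (2 * π * ξ) := by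
  have hint : Integrable fun x => 𝐞 (-(x * ξ)) • (g x : ℂ) := by
    simpa [mul_comm] using (Real.fourierIntegral_convergent_iff ξ).2 (hg.ofReal (𝕜 := ℂ))
  have hexp (x : ℝ) : 𝐞 (-(x * ξ)) • (g x : ℂ) =
      (cos (2 * π * ξ * x) * g x : ℝ) + (-(sin (2 * π * ξ * x) * g x) : ℝ) * Complex.I := by
    rw [Circle.smul_def, fourierChar_apply, Complex.exp_mul_I,
      show 2 * π * -(x * ξ) = -(2 * π * ξ * x) by ring]
    push_cast
    rw [Complex.cos_neg, Complex.sin_neg, smul_eq_mul]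
    ring
  have hodd : ∫ x, -(sin (2 * π * ξ * x) * g x) = 0 := by
    rw [← self_eq_neg, ← integral_neg, ← integral_neg_eq_self]
    simp [heven]
  rw [fourier_real_eq, ← integral_re_add_im hint]
  simp only [hexp, RCLike.re_eq_complex_re, RCLike.im_eq_complex_im, RCLike.I_to_complex,
    Complex.add_re, Complex.add_im, Complex.ofReal_re, Complex.ofReal_im, Complex.re_ofReal_mul,
    Complex.im_ofReal_mul, Complex.I_re, Complex.I_im, mul_zero, mul_one, add_zero, zero_add, hodd]
  simp [cosTransform]

lemma cosTransform_comp_mul_left (g : ℝ → ℝ) (a t : ℝ) :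
    cosTransform (fun x => g (a * x)) (a * t) = |a⁻¹| * cosTransform g t := by
  simp only [cosTransform, mul_comm a t, mul_assoc t a]
  exact Measure.integral_comp_mul_left (fun x => cos (t * x) * g x) a

lemma cosTransform_neg (g : ℝ → ℝ) (t : ℝ) : cosTransform g (-t) = cosTransform g t := by
  simp only [cosTransform, neg_mul, cos_neg]

lemma cosTransform_cosTransform {g : ℝ → ℝ} {x : ℝ} (hg : Integrable g)
    (heven : ∀ x, g (-x) = g x) (hint : Integrable (cosTransform g)) (hx : ContinuousAt g x) :
    cosTransform (cosTransform g) x = 2 * π * g x := by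
  have hfourier : 𝓕 (fun x => (g x : ℂ)) = fun ξ => (cosTransform g (2 * π * ξ) : ℂ) :=
    funext (fourier_ofReal_eq_cosTransform hg heven)
  have hint' : Integrable fun ξ => cosTransform g (2 * π * ξ) :=
    hint.comp_mul_left' two_pi_pos.ne'
  have heven' (ξ : ℝ) : cosTransform g (2 * π * -ξ) = cosTransform g (2 * π * ξ) := by
    rw [mul_neg, cosTransform_neg]
  have hinv : 𝓕⁻ (𝓕 fun x => (g x : ℂ)) x = g x :=
    hg.ofReal.fourierInv_fourier_eq (hfourier ▸ hint'.ofReal)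
      (Complex.continuous_ofReal.continuousAt.comp hx)
  rw [hfourier, fourierInv_eq_fourier_neg, fourier_ofReal_eq_cosTransform hint' heven',
    Complex.ofReal_inj, mul_neg, cosTransform_neg, cosTransform_comp_mul_left,
    abs_of_pos (inv_pos.2 two_pi_pos)] at hinv
  rw [← hinv, mul_inv_cancel_left₀ two_pi_pos.ne']

lemma cosTransform_reducedBessel {a : ℝ} (ha : 3 / 2 < a) (x : ℝ) :
    cosTransform (reducedBessel a) x =
      2 * π / (√π * Gamma (a - 1 / 2)) * max (1 - x ^ 2) 0 ^ (a - 3 / 2) := by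
  have hb : 0 < a - 3 / 2 := by linarith
  have hΓ : 0 < Gamma (a - 1 / 2) := Gamma_pos_of_pos (by linarith)
  have hpoisson : cosTransform (gegenbauerWeight (a - 3 / 2)) =
      fun t => √π * Gamma (a - 1 / 2) * reducedBessel a t := by
    ext t
    rw [cosTransform_gegenbauerWeight (by linarith), show a - 3 / 2 + 1 = a - 1 / 2 by ring,
      sub_add_cancel]
  have hinversion : cosTransform (cosTransform (gegenbauerWeight (a - 3 / 2))) x =
      2 * π * gegenbauerWeight (a - 3 / 2) x :=
    cosTransform_cosTransform (integrable_gegenbauerWeight (by linarith)) gegenbauerWeight_neg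
      (hpoisson ▸ (integrable_reducedBessel ha).const_mul _)
      (continuous_gegenbauerWeight hb).continuousAt
  rw [hpoisson, cosTransform_const_mul, gegenbauerWeight_eq_max_rpow hb] at hinversion
  rw [div_mul_eq_mul_div, eq_div_iff (by positivity), mul_comm, hinversion]

theorem stmt_9_general (α : ℝ) (hα : 3 / 2 < α) (w : ℝ → ℝ)
    (hw : w = fun t : ℝ => ∑' ℓ : ℕ,
      Gamma α / (Gamma (α + ℓ) * (ℓ ! : ℝ)) * (-t ^ 2 / 4) ^ ℓ) (x : ℝ) :
    (1 / (2 * π)) * ∫ t : ℝ, cos (t * x) * w t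
      = (1 / 2) * (Gamma α / (Gamma (3 / 2) * Gamma (α - 1 / 2))) *
        max (1 - x ^ 2) 0 ^ (α - 3 / 2) := by
  have hw_bessel : w = fun t => Gamma α * reducedBessel α t := by
    ext t
    rw [hw, ← ((hasSum_reducedBessel α t).mul_left (Gamma α)).tsum_eq]
    exact tsum_congr fun n => by ring
  have htransform : ∫ t, cos (t * x) * w t = Gamma α * cosTransform (reducedBessel α) x := by
    simp only [hw_bessel, ← cosTransform_const_mul]
    simp only [cosTransform, mul_comm x]
  have hΓ : Gamma (3 / 2) = √π / 2 := by
    rw [show (3 / 2 : ℝ) = 1 / 2 + 1 by norm_num, Gamma_add_one (by norm_num), Gamma_one_half_eq]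
    ring
  rw [htransform, cosTransform_reducedBessel hα, hΓ]
  field_simp

/-- For `|x| < 1`, the Fourier transform of `w(t) = ₀F₁(α; -t²/4)` equals
`(1/2)·(Γ(α)/(Γ(3/2)Γ(α-1/2)))·(1-x²)^{α-3/2}` (Lemma 5.1 of Kopp–Miller). -/
theorem stmt_9 (α : ℝ) (hα : 3 / 2 < α)
    (w : ℝ → ℝ)
    (hw : w = fun t : ℝ => ∑' ℓ : ℕ,
      Real.Gamma α / (Real.Gamma (α + ℓ) * (Nat.factorial ℓ : ℝ)) * (-t ^ 2 / 4) ^ ℓ) :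
    ∀ x : ℝ, |x| < 1 →
      (1 / (2 * Real.pi)) * ∫ t : ℝ, Real.cos (t * x) * w t
        = (1 / 2) * (Real.Gamma α / (Real.Gamma (3 / 2) * Real.Gamma (α - 1 / 2))) *
          (1 - x ^ 2) ^ (α - 3 / 2) := by
  intro x hx
  rw [stmt_9_general α hα w hw, max_eq_left (sub_nonneg.2 ((sq_le_one_iff_abs_le_one x).2 hx.le))]
end

section
/- Let N ≥ 1 be an integer and set n = N². Let c : ℕ → ℝ be a sequence such that for every real z with 0 < z < 1, the series ∑_{ℓ=0}^∞ c(ℓ)·z^ℓ converges to (1/(2z))·(((1+z)/(1−z))^N − 1). Then for every u ∈ ℝ, the series ∑_{ℓ=0}^∞ (Γ(n/2)/(Γ(n/2 + ℓ)·ℓ!))·c(ℓ)·u^ℓ converges and equals ∑_{j=0}^{N−1} C(N, j+1)·(Γ(n/2)/(Γ(n/2 + j)·j!))·₀F₁(n/2 + j; u)·(2u)^j, where C(N, j+1) is the binomial coefficient. (Up to a factor 1/N and the substitution u = −(rt)²/4, the left-hand side is the characteristic function φ(t, S₂(N, r)) of the spherical unitary ensemble, and this identity gives its closed form in terms of Bessel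 functions.) -/
open Real

/-- The confluent hypergeometric limit function
`₀F₁(a; u) = ∑ₗ Γ(a)/(Γ(a+ℓ)·ℓ!) · uˡ`. -/
noncomputable def hyp0F1 (a u : ℝ) : ℝ :=
  ∑' ℓ : ℕ, Real.Gamma a / (Real.Gamma (a + ℓ) * (Nat.factorial ℓ : ℝ)) * u ^ ℓ

/-!
Expanding `((1+z)/(1-z))^N = (1 + 2z/(1-z))^N` by the binomial theorem and using
`z^j/(1-z)^(j+1) = ∑ C(ℓ, j) z^ℓ`, uniqueness of Taylor coefficients gives
`c ℓ = ∑ j < N, C(N, j+1) 2^j C(ℓ, j)`. The weight `Γ(a)/(Γ(a+ℓ) ℓ!)` absorbs `C(ℓ, j)`: for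
`ℓ = m + j` their product is the `j`-th weight at `a` times the `m`-th weight at `a + j`, so
summation over `m` produces `₀F₁(a+j; u)`.
-/

open Filter Topology

section PowerSeries

open FormalMultilinearSeries

variable {𝕜 : Type*} [NontriviallyNormedField 𝕜] [CompleteSpace 𝕜]

theorem hasFPowerSeriesAt_tsum_mul_pow_of_summable {c : ℕ → 𝕜} {z : 𝕜}
    (hz : z ≠ 0) (hc : Summable fun ℓ ↦ c ℓ * z ^ ℓ) :
    HasFPowerSeriesAt (fun w ↦ ∑' ℓ, c ℓ * w ^ ℓ) (ofScalars 𝕜 c) 0 := by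
  have le_radius : (‖z‖₊ : ENNReal) ≤ (ofScalars 𝕜 c).radius := by
    refine le_radius_of_tendsto _ (l := 0) ?_
    simpa only [ofScalars_norm, coe_nnnorm, norm_mul, norm_pow] using
      tendsto_zero_iff_norm_tendsto_zero.mp hc.tendsto_atTop_zero
  have radius_pos : 0 < (ofScalars 𝕜 c).radius :=
    (ENNReal.coe_pos.mpr (nnnorm_pos.mpr hz)).trans_le le_radius
  have sum_eq : (ofScalars 𝕜 c).sum = fun w ↦ ∑' ℓ, c ℓ * w ^ ℓ := ofScalarsSum_eq_tsum c
  exact sum_eq ▸ ((ofScalars 𝕜 c).hasFPowerSeriesOnBall radius_pos).hasFPowerSeriesAt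

theorem eq_of_frequently_hasSum_mul_pow {c d : ℕ → 𝕜} {f : 𝕜 → 𝕜}
    (h : ∃ᶠ z in 𝓝[≠] 0,
      HasSum (fun ℓ ↦ c ℓ * z ^ ℓ) (f z) ∧ HasSum (fun ℓ ↦ d ℓ * z ^ ℓ) (f z)) :
    c = d := by
  obtain ⟨z, ⟨hcz, hdz⟩, hz⟩ := (h.and_eventually eventually_mem_nhdsWithin).exists
  have hc := hasFPowerSeriesAt_tsum_mul_pow_of_summable hz hcz.summable
  have hd := hasFPowerSeriesAt_tsum_mul_pow_of_summable hz hdz.summable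
  have eventually_eq := (hc.analyticAt.frequently_eq_iff_eventually_eq hd.analyticAt).mp <|
    h.mono fun w hw ↦ hw.1.tsum_eq.trans hw.2.tsum_eq.symm
  exact ofScalars_series_injective 𝕜 𝕜 <|
    hc.eq_formalMultilinearSeries_of_eventually hd eventually_eq

end PowerSeries

section BinomialSeries

theorem hasSum_choose_mul_iff {R : Type*} [Semiring R] [TopologicalSpace R] (j : ℕ) {f : ℕ → R}
    {s : R} :
    HasSum (fun ℓ ↦ (ℓ.choose j : R) * f ℓ) s ↔
      HasSum (fun m ↦ ((m + j).choose j : R) * f (m + j)) s := by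
  refine ((add_left_injective j).hasSum_iff fun ℓ hℓ ↦ ?_).symm
  have hlt : ℓ < j := not_le.mp fun h ↦ hℓ ⟨ℓ - j, Nat.sub_add_cancel h⟩
  rw [Nat.choose_eq_zero_of_lt hlt, Nat.cast_zero, zero_mul]

theorem hasSum_choose_mul_pow {𝕜 : Type*} [NormedDivisionRing 𝕜] [CompleteSpace 𝕜] (j : ℕ) {z : 𝕜}
    (hz : ‖z‖ < 1) :
    HasSum (fun ℓ ↦ (ℓ.choose j : 𝕜) * z ^ ℓ) (z ^ j / (1 - z) ^ (j + 1)) := by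
  rw [hasSum_choose_mul_iff]
  convert! (hasSum_choose_mul_geometric_of_norm_lt_one j hz).mul_left (z ^ j) using 1
  · ext m
    rw [pow_add, pow_mul_comm, (Nat.cast_commute _ _).left_comm]
  · exact div_eq_mul_one_div _ _

end BinomialSeries

section HarerZagier

/-- The `ℓ`-th Taylor coefficient at `0` of the Harer–Zagier generating function
`(1/(2z)) (((1+z)/(1-z))^N - 1)`. -/
def harerZagierCoeff (N ℓ : ℕ) : ℕ :=
  ∑ j ∈ Finset.range N, N.choose (j + 1) * 2 ^ j * ℓ.choose j

theorem harerZagier_eq_sum {K : Type*} [Field K] [NeZero (2 : K)] (N : ℕ) {z : K} (hz₀ : z ≠ 0)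
    (hz₁ : 1 - z ≠ 0) :
    1 / (2 * z) * (((1 + z) / (1 - z)) ^ N - 1) =
      ∑ j ∈ Finset.range N, (N.choose (j + 1) * 2 ^ j : K) * (z ^ j / (1 - z) ^ (j + 1)) := by
  have quotient_eq : (1 + z) / (1 - z) = 2 * z / (1 - z) + 1 := by field_simp; ring
  have binomial : ((1 + z) / (1 - z)) ^ N - 1 =
      ∑ j ∈ Finset.range N, (2 * z / (1 - z)) ^ (j + 1) * N.choose (j + 1) := by
    rw [quotient_eq, add_pow, Finset.sum_range_succ']
    simp only [one_pow, mul_one, pow_zero, Nat.choose_zero_right, Nat.cast_one,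
      add_sub_cancel_right]
  rw [binomial, Finset.mul_sum]
  refine Finset.sum_congr rfl fun j _ ↦ ?_
  rw [div_pow, pow_succ (2 * z), mul_pow]
  field_simp

theorem hasSum_harerZagierCoeff_mul_pow {𝕜 : Type*} [NormedField 𝕜] [CompleteSpace 𝕜]
    [NeZero (2 : 𝕜)] (N : ℕ) {z : 𝕜} (hz₀ : z ≠ 0) (hz : ‖z‖ < 1) :
    HasSum (fun ℓ ↦ (harerZagierCoeff N ℓ : 𝕜) * z ^ ℓ)
      (1 / (2 * z) * (((1 + z) / (1 - z)) ^ N - 1)) := by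
  have hz₁ : 1 - z ≠ 0 := sub_ne_zero.mpr fun h ↦ by simp [← h] at hz
  rw [harerZagier_eq_sum N hz₀ hz₁]
  convert! hasSum_sum fun j (_ : j ∈ Finset.range N) ↦
    (hasSum_choose_mul_pow j hz).mul_left (N.choose (j + 1) * 2 ^ j : 𝕜) using 2 with ℓ
  simp only [harerZagierCoeff, Nat.cast_sum, Nat.cast_mul, Nat.cast_pow, Nat.cast_ofNat,
    Finset.sum_mul, mul_assoc]

end HarerZagier

section Hypergeometric

/-- The `ℓ`-th coefficient `1 / (a (a+1) ⋯ (a+ℓ-1) ℓ!)` of the series defining `hyp0F1 a`, with the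
rising factorial written as a quotient of Gamma values. If `a` is a nonpositive integer then
`Real.Gamma a = 0`, so every coefficient is `0`. -/
noncomputable def hyp0F1Coeff (a : ℝ) (ℓ : ℕ) : ℝ :=
  Real.Gamma a / (Real.Gamma (a + ℓ) * (Nat.factorial ℓ : ℝ))

theorem hyp0F1Coeff_succ {a : ℝ} {ℓ : ℕ} (h : a + ℓ ≠ 0) :
    hyp0F1Coeff a (ℓ + 1) = hyp0F1Coeff a ℓ / ((a + ℓ) * (ℓ + 1)) := by
  have Gamma_succ : Real.Gamma (a + (ℓ + 1 : ℕ)) = (a + ℓ) * Real.Gamma (a + ℓ) := by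
    rw [Nat.cast_succ, ← add_assoc, Real.Gamma_add_one h]
  rw [hyp0F1Coeff, hyp0F1Coeff, Gamma_succ, Nat.factorial_succ, Nat.cast_mul, Nat.cast_succ,
    div_div]
  ring

theorem summable_hyp0F1Coeff_mul_pow (a u : ℝ) : Summable fun ℓ ↦ hyp0F1Coeff a ℓ * u ^ ℓ := by
  have shift_atTop : Tendsto (fun ℓ : ℕ ↦ a + ℓ) atTop atTop :=
    tendsto_atTop_add_const_left _ a tendsto_natCast_atTop_atTop
  have ratio_tendsto : Tendsto (fun ℓ : ℕ ↦ u / ((a + ℓ) * (ℓ + 1))) atTop (𝓝 0) :=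
    tendsto_const_nhds.div_atTop <| shift_atTop.atTop_mul_atTop₀ <|
      tendsto_atTop_add_const_right _ 1 tendsto_natCast_atTop_atTop
  refine summable_of_ratio_norm_eventually_le one_half_lt_one ?_
  filter_upwards [shift_atTop.eventually_ne_atTop 0,
    (tendsto_zero_iff_norm_tendsto_zero.mp ratio_tendsto).eventually_le_const one_half_pos]
    with ℓ hℓ ratio_le
  have term_succ : hyp0F1Coeff a (ℓ + 1) * u ^ (ℓ + 1) =
      u / ((a + ℓ) * (ℓ + 1)) * (hyp0F1Coeff a ℓ * u ^ ℓ) := by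
    rw [hyp0F1Coeff_succ hℓ]
    ring
  rw [term_succ, norm_mul]
  gcongr

theorem hasSum_hyp0F1 (a u : ℝ) : HasSum (fun ℓ ↦ hyp0F1Coeff a ℓ * u ^ ℓ) (hyp0F1 a u) :=
  (summable_hyp0F1Coeff_mul_pow a u).hasSum

theorem choose_mul_hyp0F1Coeff_add {a : ℝ} {j : ℕ} (h : Real.Gamma (a + j) ≠ 0) (m : ℕ) :
    ((m + j).choose j : ℝ) * hyp0F1Coeff a (m + j) =
      hyp0F1Coeff a j * hyp0F1Coeff (a + j) m := by
  have shift : a + (m + j : ℕ) = a + j + m := by push_cast; ring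
  have factorial_eq :
      ((m + j).factorial : ℝ) = (m + j).choose j * m.factorial * j.factorial := by
    exact_mod_cast (Nat.add_choose_mul_factorial_mul_factorial m j).symm
  have choose_ne_zero : ((m + j).choose j : ℝ) ≠ 0 :=
    Nat.cast_ne_zero.mpr (Nat.choose_pos (Nat.le_add_left j m)).ne'
  rw [hyp0F1Coeff, hyp0F1Coeff, hyp0F1Coeff, shift, factorial_eq]
  field_simp

theorem hasSum_choose_mul_hyp0F1Coeff_mul_pow {a : ℝ} {j : ℕ} (h : Real.Gamma (a + j) ≠ 0)
    (u : ℝ) :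
    HasSum (fun ℓ ↦ (ℓ.choose j : ℝ) * (hyp0F1Coeff a ℓ * u ^ ℓ))
      (hyp0F1Coeff a j * u ^ j * hyp0F1 (a + j) u) := by
  rw [hasSum_choose_mul_iff]
  convert! (hasSum_hyp0F1 (a + j) u).mul_left (hyp0F1Coeff a j * u ^ j) using 2 with m
  rw [← mul_assoc, choose_mul_hyp0F1Coeff_add h]
  ring

theorem hasSum_hyp0F1Coeff_mul_harerZagierCoeff_mul_pow (N : ℕ) {a : ℝ}
    (h : ∀ j < N, Real.Gamma (a + j) ≠ 0) (u : ℝ) :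
    HasSum (fun ℓ ↦ hyp0F1Coeff a ℓ * harerZagierCoeff N ℓ * u ^ ℓ)
      (∑ j ∈ Finset.range N,
        (N.choose (j + 1) : ℝ) * hyp0F1Coeff a j * hyp0F1 (a + j) u * (2 * u) ^ j) := by
  convert! hasSum_sum fun j (hj : j ∈ Finset.range N) ↦
    (hasSum_choose_mul_hyp0F1Coeff_mul_pow (h j (Finset.mem_range.mp hj)) u).mul_left
      (N.choose (j + 1) * 2 ^ j : ℝ) using 2 with ℓ j
  · rw [harerZagierCoeff, Nat.cast_sum, Finset.mul_sum, Finset.sum_mul]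
    refine Finset.sum_congr rfl fun j _ ↦ ?_
    push_cast
    ring
  · ring

end Hypergeometric

theorem stmt_13_general (N : ℕ) {a : ℝ} (ha : ∀ m : ℕ, a ≠ -m) {c : ℕ → ℝ}
    (hc : ∃ᶠ z in 𝓝[≠] (0 : ℝ), HasSum (fun ℓ ↦ c ℓ * z ^ ℓ)
      (1 / (2 * z) * (((1 + z) / (1 - z)) ^ N - 1))) (u : ℝ) :
    HasSum (fun ℓ ↦ hyp0F1Coeff a ℓ * c ℓ * u ^ ℓ)
      (∑ j ∈ Finset.range N,
        (N.choose (j + 1) : ℝ) * hyp0F1Coeff a j * hyp0F1 (a + j) u * (2 * u) ^ j) := by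
  have hasSum_near_zero : ∀ᶠ z in 𝓝[≠] (0 : ℝ),
      HasSum (fun ℓ ↦ (harerZagierCoeff N ℓ : ℝ) * z ^ ℓ)
        (1 / (2 * z) * (((1 + z) / (1 - z)) ^ N - 1)) := by
    filter_upwards [eventually_mem_nhdsWithin,
      nhdsWithin_le_nhds (Metric.ball_mem_nhds 0 one_pos)] with z hz₀ hz
    exact hasSum_harerZagierCoeff_mul_pow N hz₀ (mem_ball_zero_iff.mp hz)
  obtain rfl : c = fun ℓ ↦ (harerZagierCoeff N ℓ : ℝ) :=
    eq_of_frequently_hasSum_mul_pow (hc.and_eventually hasSum_near_zero)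
  have Gamma_ne_zero (j : ℕ) : Real.Gamma (a + j) ≠ 0 :=
    Real.Gamma_ne_zero fun m hm ↦ ha (j + m) (by push_cast; linarith)
  exact hasSum_hyp0F1Coeff_mul_harerZagierCoeff_mul_pow N (fun j _ ↦ Gamma_ne_zero j) u

/-- Closed form of the series `∑ₗ Γ(n/2)/(Γ(n/2+ℓ)·ℓ!)·c(ℓ)·uˡ`, where
`c(ℓ)` are the Taylor coefficients of the Harer–Zagier rational function
`(1/(2z))·(((1+z)/(1-z))^N - 1)` and `n = N²`. -/
theorem stmt_13 (N : ℕ) (hN : 1 ≤ N) (c : ℕ → ℝ)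
    (hc : ∀ z : ℝ, 0 < z → z < 1 →
      HasSum (fun ℓ : ℕ => c ℓ * z ^ ℓ)
        (1 / (2 * z) * (((1 + z) / (1 - z)) ^ N - 1))) :
    ∀ u : ℝ,
      HasSum (fun ℓ : ℕ =>
          Real.Gamma ((N : ℝ) ^ 2 / 2) /
            (Real.Gamma ((N : ℝ) ^ 2 / 2 + ℓ) * (Nat.factorial ℓ : ℝ)) * c ℓ * u ^ ℓ)
        (∑ j ∈ Finset.range N, (N.choose (j + 1) : ℝ) *
          (Real.Gamma ((N : ℝ) ^ 2 / 2) /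
            (Real.Gamma ((N : ℝ) ^ 2 / 2 + j) * (Nat.factorial j : ℝ))) *
          hyp0F1 ((N : ℝ) ^ 2 / 2 + j) u * (2 * u) ^ j) := by
  have ha (m : ℕ) : (N : ℝ) ^ 2 / 2 ≠ -m := by
    have : (0 : ℝ) < N := by exact_mod_cast hN
    exact ((neg_nonpos.mpr m.cast_nonneg).trans_lt (by positivity)).ne'
  have hc_right : ∀ᶠ z in 𝓝[>] (0 : ℝ), HasSum (fun ℓ ↦ c ℓ * z ^ ℓ)
      (1 / (2 * z) * (((1 + z) / (1 - z)) ^ N - 1)) := by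
    filter_upwards [Ioo_mem_nhdsGT one_pos] with z hz using hc z hz.1 hz.2
  exact stmt_13_general N ha (hc_right.frequently.filter_mono (nhdsGT_le_nhdsNE 0))
end
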